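/- For n ≥ 0 let B_n = (10^n, 3·10^n) ⊂ ℝ and U = ⋃_{n≥0} B_n. Let h₁, h₂ : ℝ → ℝ be homeomorphisms such that h₁(x) = x/20 + 15·10^{n−2} for x ∈ B_n (n > 0), h₁(x) = x/20 + 1 for x ≤ 3, h₂(x) = 5x + 5·10^n for x ∈ B_n (n > 0), h₂(x) = 5x + 5 for x ≤ 3, and such that the iterated function system (h₁, h₂) with constant probabilities p₁, p₂ = 1 − p₁ satisfies the contracting-on-average condition on all of ℝ, where p₁ > log(50/7)/log(500/17). Then the unique invariant probability measure ν (satisfying ν = p₁·(h₁)_*ν + p₂·(h₂)_*ν) has Hausdorff dimension dim_H(ν) = (p₁ log p₁ + p₂ log p₂) / (−2 p₁ log 2 − (p₁ − p₂) log 5). -/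

import Mathlib

/-!
The cylinders of level `k` are the images of the pieces of a Markov system under words of length
`k`: the image of the piece `n` under the word `w` has diameter `(∏ j, ρ (w j)) * diam (I n)`, and,
the images being strongly separated, the word `w` carries mass `∏ j, p (w j)`. As the letters are
independent, a Chernoff bound shows that both products grow exponentially at the rates of their mean
logarithms, so a typical cylinder of diameter `r` has mass about `r ^ s`, where `s` is the quotient
of the mean logarithms of `p` and of `ρ`. Covering typical points by their cylinders bounds the
dimension from above. For the lower bound, a ball of radius `r` meets boundedly many cylinders of
diameter comparable to `r`, and the mass distribution principle applies.

In the example, the pieces are the intervals `B_n`, which carry `ν` because the orbits of `h₁` end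
up near its fixed point `20 / 19`, a point of `B_0`. Along the intervals the system is a random walk
with a reflecting barrier, and its stationary measure exists only if `p₂ ≤ p₁`; this makes the mean
logarithm of the contraction ratio negative.
-/

open MeasureTheory Metric Filter ENNReal NNReal

noncomputable section

/-- The upper Hausdorff dimension of a measure: the infimum of the Hausdorff
dimensions of sets of full measure. -/
def upperDimH {X : Type*} [EMetricSpace X] [MeasurableSpace X]
    (μ : Measure X) : ℝ≥0∞ :=
  ⨅ (s : Set X) (_ : μ sᶜ = 0), dimH s

/-- The lower Hausdorff dimension of a measure: the infimum of the Hausdorff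
dimensions of sets of positive measure. -/
def lowerDimH {X : Type*} [EMetricSpace X] [MeasurableSpace X]
    (μ : Measure X) : ℝ≥0∞ :=
  ⨅ (s : Set X) (_ : 0 < μ s), dimH s

namespace MarkovIFS

open Set Function Topology

section Dimension

variable {X : Type*} [MeasurableSpace X]

theorem lowerDimH_le_upperDimH [EMetricSpace X] (μ : Measure X) [NeZero μ] :
    lowerDimH μ ≤ upperDimH μ := by
  refine le_iInf₂ fun A hA ↦ ?_
  have hA_pos : 0 < μ A := by
    refine pos_iff_ne_zero.2 fun hA₀ ↦ NeZero.ne μ <| Measure.measure_univ_eq_zero.1 ?_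
    rw [← union_compl_self A, measure_union_null hA₀ hA]
  exact iInf₂_le A hA_pos

theorem upperDimH_le_dimH [EMetricSpace X] {μ : Measure X} {A : Set X} (hA : μ Aᶜ = 0) :
    upperDimH μ ≤ dimH A :=
  iInf₂_le A hA

theorem measure_setOf_eventually_mem_le_liminf (μ : Measure X) (s : ℕ → Set X) :
    μ {x | ∀ᶠ k in atTop, x ∈ s k} ≤ liminf (fun k ↦ μ (s k)) atTop := by
  have h_eq : {x | ∀ᶠ k in atTop, x ∈ s k} = ⋃ K, ⋂ k ≥ K, s k := by
    ext x; simp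
  have h_mono : Monotone fun K ↦ ⋂ k ≥ K, s k :=
    fun _ _ hab ↦ biInter_mono (fun _ hk ↦ hab.trans hk) fun _ _ ↦ subset_rfl
  rw [h_eq, h_mono.measure_iUnion, liminf_eq_iSup_iInf_of_nat]
  exact iSup_mono fun K ↦ le_iInf₂ fun k hk ↦ measure_mono (biInter_subset_of_mem hk)

theorem tendsto_measure_compl_accumulate {μ : Measure X} [IsFiniteMeasure μ] {s : ℕ → Set X}
    (hs : ∀ n, MeasurableSet (s n)) (h : ∀ᵐ x ∂μ, x ∈ ⋃ n, s n) :
    Tendsto (fun n ↦ μ (accumulate s n)ᶜ) atTop (𝓝 0) := by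
  have h_inter : μ (⋂ n, (accumulate s n)ᶜ) = 0 := by
    rwa [← compl_iUnion, iUnion_accumulate]
  rw [← h_inter]
  refine tendsto_measure_iInter_atTop (fun n ↦ ?_)
    (fun _ _ hmn ↦ compl_subset_compl.2 (monotone_accumulate hmn)) ⟨0, by finiteness⟩
  exact (MeasurableSet.biUnion (finite_Iic n).countable fun m _ ↦ hs m).compl.nullMeasurableSet

theorem dimH_setOf_infinite_mem_le [EMetricSpace X] [BorelSpace X] {α : Type*} [Countable α]
    {E : α → Set X} {s : ℝ≥0} (hs : 0 < s) (h : ∑' i, ediam (E i) ^ (s : ℝ) ≠ ∞) :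
    dimH {x | {i | x ∈ E i}.Infinite} ≤ s := by
  have hs' : (0 : ℝ) < s := hs
  let tailSum (F : Finset α) : ℝ≥0∞ := ∑' i : {i // i ∉ F}, ediam (E i) ^ (s : ℝ)
  have h_tail : Tendsto tailSum atTop (𝓝 0) := ENNReal.tendsto_tsum_compl_atTop_zero h
  have h_mesh : Tendsto (fun F ↦ tailSum F ^ (s : ℝ)⁻¹) atTop (𝓝 0) := by
    simpa [hs'] using h_tail.ennrpow_const (s : ℝ)⁻¹
  have h_diam (F : Finset α) (i : {i // i ∉ F}) : ediam (E i) ≤ tailSum F ^ (s : ℝ)⁻¹ := by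
    rw [ENNReal.le_rpow_inv_iff hs']
    exact ENNReal.le_tsum (f := fun i : {i // i ∉ F} ↦ ediam (E i) ^ (s : ℝ)) i
  have h_cover (F : Finset α) :
      {x | {i | x ∈ E i}.Infinite} ⊆ ⋃ i : {i // i ∉ F}, E i := fun x hx ↦ by
    obtain ⟨i, hi, hiF⟩ := hx.exists_notMem_finset F
    exact mem_iUnion.2 ⟨⟨i, hiF⟩, hi⟩
  have h_le := Measure.hausdorffMeasure_le_liminf_tsum (s : ℝ) _ _ h_mesh _
    (.of_forall h_diam) (.of_forall h_cover)
  refine dimH_le_of_hausdorffMeasure_ne_top (ne_top_of_le_ne_top zero_ne_top ?_)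
  exact h_le.trans_eq h_tail.liminf_eq

theorem le_dimH_of_measure_closedBall_inter_le [MetricSpace X] [BorelSpace X] {μ : Measure X}
    {A G : Set X} (hG : MeasurableSet G) {s : ℝ≥0} {K : ℝ≥0∞} (hK : K ≠ ∞) {R : ℝ} (hR : 0 < R)
    (h : ∀ z, ∀ r ∈ Ioo 0 R, μ (closedBall z r ∩ G) ≤ K * ENNReal.ofReal r ^ (s : ℝ))
    (hA : μ (A ∩ G) ≠ 0) : s ≤ dimH A := by
  have h_diam (J : Set X) (hJ : ediam J ≤ ENNReal.ofReal (R / 2)) :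
      μ (J ∩ G) ≤ K * ediam J ^ (s : ℝ) := by
    obtain rfl | ⟨z, hz⟩ := J.eq_empty_or_nonempty
    · simp
    have hJ_top : ediam J ≠ ∞ := ne_top_of_le_ne_top ofReal_ne_top hJ
    have h_lim : Tendsto (fun r ↦ K * ENNReal.ofReal r ^ (s : ℝ)) (𝓝[>] (diam J))
        (𝓝 (K * ENNReal.ofReal (diam J) ^ (s : ℝ))) := by
      refine (Continuous.tendsto ?_ _).mono_left nhdsWithin_le_nhds
      exact (ENNReal.continuous_const_mul hK).comp
        (ENNReal.continuous_rpow_const.comp ENNReal.continuous_ofReal)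
    rw [← ENNReal.ofReal_toReal hJ_top]
    refine ge_of_tendsto h_lim ?_
    have h_lt : diam J < R := (ENNReal.toReal_le_of_le_ofReal (by positivity) hJ).trans_lt
      (half_lt_self hR)
    filter_upwards [Ioo_mem_nhdsGT h_lt] with r hr
    refine (measure_mono (inter_subset_inter_left G fun x hx ↦ ?_)).trans
      (h z r ⟨diam_nonneg.trans_lt hr.1, hr.2⟩)
    exact (dist_le_diam_of_mem' hJ_top hx hz).trans hr.1.le
  have h_le : K⁻¹ • μ.restrict G ≤ μH[s] := by
    refine Measure.le_hausdorffMeasure _ _ _ (ofReal_pos.2 (half_pos hR)) fun J hJ ↦ ?_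
    rw [Measure.smul_apply, Measure.restrict_apply' hG, smul_eq_mul, mul_comm, ← div_eq_mul_inv]
    exact ENNReal.div_le_of_le_mul' (h_diam J hJ)
  refine le_dimH_of_hausdorffMeasure_ne_zero (ne_bot_of_le_ne_bot ?_ (h_le A))
  rw [Measure.smul_apply, Measure.restrict_apply' hG, smul_eq_mul]
  exact mul_ne_zero (ENNReal.inv_ne_zero.2 hK) hA

end Dimension

section Chernoff

variable {ι : Type*} [Fintype ι] {p : ι → ℝ}

theorem sum_mul_log_div (p : ι → ℝ) {a b : ι → ℝ} (ha : ∀ i, 0 < a i) (hb : ∀ i, 0 < b i) :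
    ∑ i, p i * Real.log (a i / b i) = ∑ i, p i * Real.log (a i) - ∑ i, p i * Real.log (b i) := by
  simp only [Real.log_div (ha _).ne' (hb _).ne', mul_sub, Finset.sum_sub_distrib]

theorem sum_mul_log_rpow (p : ι → ℝ) {a : ι → ℝ} (ha : ∀ i, 0 < a i) (s : ℝ) :
    ∑ i, p i * Real.log (a i ^ s) = s * ∑ i, p i * Real.log (a i) := by
  simp only [Real.log_rpow (ha _), mul_left_comm, Finset.mul_sum]

theorem exists_sum_mul_div_rpow_lt_one {a : ι → ℝ} (hp : ∑ i, p i = 1) (ha : ∀ i, 0 < a i)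
    (h : ∑ i, p i * Real.log (a i) < 0) :
    ∃ γ ∈ Ioo (0 : ℝ) 1, ∃ t > (0 : ℝ), ∑ i, p i * (a i / γ) ^ t < 1 := by
  obtain ⟨δ, h_lt_δ, hδ⟩ := exists_between h
  let φ (t : ℝ) : ℝ := ∑ i, p i * (a i / Real.exp δ) ^ t
  have h_base (i : ι) : 0 < a i / Real.exp δ := div_pos (ha i) (Real.exp_pos δ)
  have h_deriv : HasDerivAt φ (∑ i, p i * Real.log (a i) - δ) 0 := by
    have h_sum : ∑ i, p i * Real.log (a i) - δ = ∑ i, p i * Real.log (a i / Real.exp δ) := by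
      rw [sum_mul_log_div p ha fun _ ↦ Real.exp_pos δ, Real.log_exp, ← Finset.sum_mul, hp, one_mul]
    rw [h_sum]
    refine HasDerivAt.fun_sum fun i _ ↦ HasDerivAt.const_mul _ ?_
    simpa using (Real.hasStrictDerivAt_const_rpow (h_base i) 0).hasDerivAt
  have h_zero : φ 0 = 1 := by simp [φ, hp]
  have h_slope : ∀ᶠ t in 𝓝[>] (0 : ℝ), slope φ 0 t < 0 :=
    (hasDerivAt_iff_tendsto_slope.1 h_deriv).eventually (gt_mem_nhds (sub_neg.2 h_lt_δ))
      |>.filter_mono (nhdsWithin_mono _ fun _ ht ↦ ne_of_gt ht)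
  obtain ⟨t, h_neg, ht⟩ := (h_slope.and self_mem_nhdsWithin).exists
  refine ⟨Real.exp δ, ⟨Real.exp_pos δ, Real.exp_lt_one_iff.2 hδ⟩, t, ht, ?_⟩
  have ht' : 0 < t - 0 := by simpa using ht
  rw [slope_def_field, h_zero, div_lt_iff₀ ht', zero_mul, sub_neg] at h_neg
  exact h_neg

theorem sum_prod_filter_lt_prod_le {g : ι → ℝ} (hp : ∀ i, 0 ≤ p i) (hg : ∀ i, 0 ≤ g i)
    {t c : ℝ} (ht : 0 ≤ t) (hc : 0 < c) (k : ℕ) :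
    ∑ w : Fin k → ι with c < ∏ j, g (w j), ∏ j, p (w j) ≤
      (c ^ t)⁻¹ * (∑ i, p i * g i ^ t) ^ k := by
  have h_prod (w : Fin k → ι) :
      ∏ j, (p (w j) * g (w j) ^ t) = (∏ j, p (w j)) * (∏ j, g (w j)) ^ t := by
    rw [Finset.prod_mul_distrib, Real.finsetProd_rpow _ _ fun _ _ ↦ hg _]
  have hp' (w : Fin k → ι) : 0 ≤ ∏ j, p (w j) := Finset.prod_nonneg fun _ _ ↦ hp _
  have hg' (w : Fin k → ι) : 0 ≤ ∏ j, g (w j) := Finset.prod_nonneg fun _ _ ↦ hg _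
  have hct : 0 < c ^ t := Real.rpow_pos_of_pos hc t
  calc ∑ w : Fin k → ι with c < ∏ j, g (w j), ∏ j, p (w j)
      ≤ ∑ w : Fin k → ι with c < ∏ j, g (w j), (c ^ t)⁻¹ * ∏ j, (p (w j) * g (w j) ^ t) := by
        refine Finset.sum_le_sum fun w hw ↦ ?_
        rw [h_prod, inv_mul_eq_div, le_div_iff₀ hct]
        gcongr
        · exact hp' w
        · exact (Finset.mem_filter.1 hw).2.le
    _ ≤ ∑ w : Fin k → ι, (c ^ t)⁻¹ * ∏ j, (p (w j) * g (w j) ^ t) := by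
        refine Finset.sum_le_sum_of_subset_of_nonneg (Finset.filter_subset _ _) fun w _ _ ↦ ?_
        rw [h_prod]
        exact mul_nonneg (inv_nonneg.2 hct.le)
          (mul_nonneg (hp' w) (Real.rpow_nonneg (hg' w) t))
    _ = (c ^ t)⁻¹ * (∑ i, p i * g i ^ t) ^ k := by
        rw [← Finset.mul_sum, ← Fintype.sum_pow (fun i ↦ p i * g i ^ t) k]

end Chernoff

section Words

variable {ι X : Type*}

/-- The composition `f (w 0) ∘ ⋯ ∘ f (w (k - 1))` of a family of maps along a word `w` of length
`k`. The recursion peels off the innermost letter, so that the image of a set under a word of length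
`k + 1` lies in the image, under its initial segment, of a set that the last letter produces. -/
def wordMap (f : ι → X → X) : ∀ {k : ℕ}, (Fin k → ι) → X → X
  | 0, _ => id
  | _ + 1, w => wordMap f (Fin.init w) ∘ f (w (Fin.last _))

/-- The points obtained by applying to `A` the words of length `k` whose `g`-weight is at most `c`.
For suitable `g`, these are the points at which the measure of the level-`k` cylinder and a power of
its diameter compare as they do at typical points. -/
def typicalSet (f : ι → X → X) (g : ι → ℝ) (c : ℝ) (k : ℕ) (A : Set X) : Set X :=
  ⋃ (w : Fin k → ι) (_ : ∏ j, g (w j) ≤ c), wordMap f w '' A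

theorem measurable_wordMap [MeasurableSpace X] {f : ι → X → X} (hf : ∀ i, Measurable (f i)) :
    ∀ {k : ℕ} (w : Fin k → ι), Measurable (wordMap f w)
  | 0, _ => measurable_id
  | _ + 1, w => (measurable_wordMap hf (Fin.init w)).comp (hf _)

theorem wordMap_succ_image (f : ι → X → X) {k : ℕ} (w : Fin (k + 1) → ι) (A : Set X) :
    wordMap f w '' A = wordMap f (Fin.init w) '' (f (w (Fin.last k)) '' A) :=
  image_comp _ _ _

/-- The strong separation of the images of `U` under an iterated function system for which `U` is
forward invariant: a point of `⋃ i, f i '' U` determines both the map and the point of `U` it comes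
from. -/
structure IsSeparated (f : ι → X → X) (U : Set X) : Prop where
  mapsTo : ∀ i, MapsTo (f i) U U
  injOn : InjOn (fun z : ι × X ↦ f z.1 z.2) (univ ×ˢ U)

namespace IsSeparated

variable {f : ι → X → X} {U : Set X}

theorem eq_of_apply_eq (h : IsSeparated f U) {i j : ι} {x y : X} (hx : x ∈ U) (hy : y ∈ U)
    (hxy : f i x = f j y) : i = j ∧ x = y :=
  Prod.ext_iff.1 <| h.injOn (x₁ := (i, x)) (x₂ := (j, y)) ⟨mem_univ _, hx⟩ ⟨mem_univ _, hy⟩ hxy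

theorem eq_of_wordMap_eq (h : IsSeparated f U) {k : ℕ} {w w' : Fin k → ι} {x y : X}
    (hx : x ∈ U) (hy : y ∈ U) (hxy : wordMap f w x = wordMap f w' y) : w = w' ∧ x = y := by
  induction k generalizing x y with
  | zero => exact ⟨Subsingleton.elim _ _, hxy⟩
  | succ k ih =>
    obtain ⟨h_init, h_last⟩ := ih (h.mapsTo _ hx) (h.mapsTo _ hy) hxy
    obtain ⟨h_letter, rfl⟩ := h.eq_of_apply_eq hx hy h_last
    exact ⟨by rw [← Fin.snoc_init_self w, ← Fin.snoc_init_self w', h_init, h_letter], rfl⟩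

end IsSeparated

end Words

section Stationary

variable {ι X : Type*} [Fintype ι] [MeasurableSpace X]

/-- `ν` is an invariant measure of the iterated function system of the measurable maps `f i`, chosen
with constant positive probabilities `p i`. -/
structure IsStationary (f : ι → X → X) (p : ι → ℝ) (ν : Measure X) : Prop where
  measurable : ∀ i, Measurable (f i)
  pos : ∀ i, 0 < p i
  sum_eq_one : ∑ i, p i = 1
  eq_sum_map : ν = ∑ i, ENNReal.ofReal (p i) • ν.map (f i)

namespace IsStationary

variable {f : ι → X → X} {p : ι → ℝ} {ν : Measure X} {U A : Set X}

theorem measure_eq_sum (h : IsStationary f p ν) (hA : MeasurableSet A) :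
    ν A = ∑ i, ENNReal.ofReal (p i) * ν (f i ⁻¹' A) := by
  conv_lhs => rw [h.eq_sum_map]
  simp [Measure.map_apply (h.measurable _) hA]

theorem measureReal_eq_sum [IsFiniteMeasure ν] (h : IsStationary f p ν) (hA : MeasurableSet A) :
    ν.real A = ∑ i, p i * ν.real (f i ⁻¹' A) := by
  rw [measureReal_def, h.measure_eq_sum hA, ENNReal.toReal_sum fun i _ ↦ by finiteness]
  simp [measureReal_def, ENNReal.toReal_ofReal (h.pos _).le]

theorem quasiMeasurePreserving (h : IsStationary f p ν) (i : ι) :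
    Measure.QuasiMeasurePreserving (f i) ν ν := by
  refine ⟨h.measurable i, .mk fun A hA hA₀ ↦ ?_⟩
  rw [h.measure_eq_sum hA, Finset.sum_eq_zero_iff] at hA₀
  rw [Measure.map_apply (h.measurable i) hA]
  exact (mul_eq_zero.1 (hA₀ i (Finset.mem_univ i))).resolve_left (ofReal_pos.2 (h.pos i)).ne'

theorem ae_mem_of_forall_exists_iterate_mem [IsFiniteMeasure ν] (h : IsStationary f p ν)
    (hU : MeasurableSet U) (h_maps : ∀ i, MapsTo (f i) U U) {i : ι}
    (h_reach : ∀ x, ∃ k, (f i)^[k] x ∈ U) : ∀ᵐ x ∂ν, x ∈ U := by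
  have h_le (j : ι) : p j * ν.real U ≤ p j * ν.real (f j ⁻¹' U) :=
    mul_le_mul_of_nonneg_left (measureReal_mono (h_maps j)) (h.pos j).le
  have h_sum : ∑ j, p j * ν.real U = ∑ j, p j * ν.real (f j ⁻¹' U) := by
    rw [← Finset.sum_mul, h.sum_eq_one, one_mul, ← h.measureReal_eq_sum hU]
  have h_eq : ν.real U = ν.real (f i ⁻¹' U) := mul_left_cancel₀ (h.pos i).ne' <|
    (Finset.sum_eq_sum_iff_of_le fun j _ ↦ h_le j).1 h_sum i (Finset.mem_univ i)
  have h_back : ∀ᵐ x ∂ν, f i x ∈ U → x ∈ U := by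
    have h_ae : U =ᵐ[ν] f i ⁻¹' U := ae_eq_of_subset_of_measure_ge (h_maps i)
      ((measureReal_eq_measureReal_iff ..).1 h_eq).ge hU.nullMeasurableSet (by finiteness)
    filter_upwards [h_ae.mem_iff] with x hx using hx.2
  have h_orbit : ∀ᵐ x ∂ν, ∀ k, f i ((f i)^[k] x) ∈ U → (f i)^[k] x ∈ U :=
    ae_all_iff.2 fun k ↦ ((h.quasiMeasurePreserving i).iterate k).ae h_back
  filter_upwards [h_orbit] with x hx
  obtain ⟨k, hk⟩ := h_reach x
  induction k with
  | zero => exact hk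
  | succ k ih => exact ih (hx k (iterate_succ_apply' (f i) k x ▸ hk))

theorem sum_prod_word_eq_one (h : IsStationary f p ν) (k : ℕ) :
    ∑ w : Fin k → ι, ∏ j, p (w j) = 1 := by
  rw [← Fintype.sum_pow, h.sum_eq_one, one_pow]

theorem prod_word_pos (h : IsStationary f p ν) {k : ℕ} (w : Fin k → ι) : 0 < ∏ j, p (w j) :=
  Finset.prod_pos fun _ _ ↦ h.pos _

variable [StandardBorelSpace X]

theorem measurableSet_image (h : IsStationary f p ν) (hs : IsSeparated f U) (hA : MeasurableSet A)
    (hAU : A ⊆ U) (i : ι) : MeasurableSet (f i '' A) :=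
  hA.image_of_measurable_injOn (h.measurable i)
    fun _ hx _ hy hxy ↦ (hs.eq_of_apply_eq (hAU hx) (hAU hy) hxy).2

theorem measure_image (h : IsStationary f p ν) (hs : IsSeparated f U) (hU : ∀ᵐ x ∂ν, x ∈ U)
    (hA : MeasurableSet A) (hAU : A ⊆ U) (i : ι) : ν (f i '' A) = ENNReal.ofReal (p i) * ν A := by
  rw [h.measure_eq_sum (h.measurableSet_image hs hA hAU i), Finset.sum_eq_single_of_mem i
    (Finset.mem_univ i)]
  · congr 1
    refine measure_congr (eventuallyEq_set.2 ?_)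
    filter_upwards [hU] with x hx
    refine ⟨fun ⟨y, hy, hyx⟩ ↦ ?_, mem_image_of_mem (f i)⟩
    exact (hs.eq_of_apply_eq (hAU hy) hx hyx).2 ▸ hy
  · refine fun j _ hji ↦ mul_eq_zero_of_right _ (measure_eq_zero_iff_ae_notMem.2 ?_)
    filter_upwards [hU] with x hx
    rintro ⟨y, hy, hyx⟩
    exact hji (hs.eq_of_apply_eq (hAU hy) hx hyx).1.symm

theorem measurableSet_wordMap_image (h : IsStationary f p ν) (hs : IsSeparated f U)
    (hA : MeasurableSet A) (hAU : A ⊆ U) {k : ℕ} (w : Fin k → ι) :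
    MeasurableSet (wordMap f w '' A) :=
  hA.image_of_measurable_injOn (measurable_wordMap h.measurable w)
    fun _ hx _ hy hxy ↦ (hs.eq_of_wordMap_eq (hAU hx) (hAU hy) hxy).2

theorem measure_wordMap_image (h : IsStationary f p ν) (hs : IsSeparated f U)
    (hU : ∀ᵐ x ∂ν, x ∈ U) (hA : MeasurableSet A) (hAU : A ⊆ U) {k : ℕ} (w : Fin k → ι) :
    ν (wordMap f w '' A) = ENNReal.ofReal (∏ j, p (w j)) * ν A := by
  induction k generalizing A with
  | zero => simp [wordMap]
  | succ k ih =>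
    rw [wordMap_succ_image, ih (h.measurableSet_image hs hA hAU _)
      ((hs.mapsTo _).mono_left hAU).image_subset, h.measure_image hs hU hA hAU, ← mul_assoc,
      ← ENNReal.ofReal_mul (h.prod_word_pos _).le, Fin.prod_univ_castSucc]
    rfl

theorem measure_biUnion_wordMap_image (h : IsStationary f p ν) (hs : IsSeparated f U)
    (hU : ∀ᵐ x ∂ν, x ∈ U) (hA : MeasurableSet A) (hAU : A ⊆ U) {k : ℕ}
    (S : Finset (Fin k → ι)) :
    ν (⋃ w ∈ S, wordMap f w '' A) = ENNReal.ofReal (∑ w ∈ S, ∏ j, p (w j)) * ν A := by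
  have h_disj : (S : Set (Fin k → ι)).PairwiseDisjoint fun w ↦ wordMap f w '' A := by
    refine fun w _ w' _ hww' ↦ disjoint_left.2 ?_
    rintro _ ⟨x, hx, rfl⟩ ⟨y, hy, hyx⟩
    exact hww' (hs.eq_of_wordMap_eq (hAU hy) (hAU hx) hyx).1.symm
  rw [measure_biUnion_finset h_disj fun w _ ↦ h.measurableSet_wordMap_image hs hA hAU w,
    ENNReal.ofReal_sum_of_nonneg fun w _ ↦ (h.prod_word_pos w).le, Finset.sum_mul]
  exact Finset.sum_congr rfl fun w _ ↦ h.measure_wordMap_image hs hU hA hAU w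

variable {g : ι → ℝ}

theorem measurableSet_typicalSet (h : IsStationary f p ν) (hs : IsSeparated f U)
    (hA : MeasurableSet A) (hAU : A ⊆ U) (c : ℝ) (k : ℕ) : MeasurableSet (typicalSet f g c k A) :=
  .iUnion fun w ↦ .iUnion fun _ ↦ h.measurableSet_wordMap_image hs hA hAU w

theorem measure_compl_typicalSet_le [IsProbabilityMeasure ν] (h : IsStationary f p ν)
    (hs : IsSeparated f U) (hU : ∀ᵐ x ∂ν, x ∈ U) (hA : MeasurableSet A) (hAU : A ⊆ U)
    (hg : ∀ i, 0 ≤ g i) {c t : ℝ} (ht : 0 ≤ t) (hc : 0 < c) (k : ℕ) :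
    ν (typicalSet f g c k A)ᶜ ≤
      ν Aᶜ + ENNReal.ofReal ((c ^ t)⁻¹ * (∑ i, p i * g i ^ t) ^ k) := by
  let allImages : Set X := ⋃ w ∈ (Finset.univ : Finset (Fin k → ι)), wordMap f w '' A
  let heavyWords : Finset (Fin k → ι) := {w | c < ∏ j, g (w j)}
  have h_all_meas : MeasurableSet allImages :=
    .biUnion (Finset.univ.countable_toSet) fun w _ ↦ h.measurableSet_wordMap_image hs hA hAU w
  have h_all : ν allImagesᶜ = ν Aᶜ := by
    rw [prob_compl_eq_one_sub h_all_meas, prob_compl_eq_one_sub hA,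
      h.measure_biUnion_wordMap_image hs hU hA hAU, h.sum_prod_word_eq_one, ofReal_one, one_mul]
  have h_heavy : ν (⋃ w ∈ heavyWords, wordMap f w '' A) ≤
      ENNReal.ofReal ((c ^ t)⁻¹ * (∑ i, p i * g i ^ t) ^ k) := by
    rw [h.measure_biUnion_wordMap_image hs hU hA hAU]
    refine (mul_le_of_le_one_right' prob_le_one).trans (ofReal_le_ofReal ?_)
    exact sum_prod_filter_lt_prod_le (fun i ↦ (h.pos i).le) hg ht hc k
  have h_sub : (typicalSet f g c k A)ᶜ ⊆ allImagesᶜ ∪ ⋃ w ∈ heavyWords, wordMap f w '' A := by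
    intro x hx
    by_cases hx_all : x ∈ allImages
    · obtain ⟨w, -, hw⟩ := mem_iUnion₂.1 hx_all
      refine .inr (mem_iUnion₂.2 ⟨w, ?_, hw⟩)
      exact Finset.mem_filter.2 ⟨Finset.mem_univ w, not_le.1 fun hle ↦
        hx (mem_iUnion₂.2 ⟨w, hle, hw⟩)⟩
    · exact .inl hx_all
  exact (measure_mono h_sub).trans <| (measure_union_le _ _).trans (add_le_add h_all.le h_heavy)

end IsStationary

end Stationary

section PiecewiseSimilar

variable {ι X : Type*} [MetricSpace X] [MeasurableSpace X]

/-- A Markov system of piecewise similarities: the map `f i` carries the bounded piece `I n` into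
the piece `I (σ i n)` and scales distances within it by `ρ i`, and the images of the union of all
pieces are strongly separated. -/
structure IsPiecewiseSimilar (f : ι → X → X) (ρ : ι → ℝ) (I : ℕ → Set X) (σ : ι → ℕ → ℕ) :
    Prop where
  measurableSet : ∀ n, MeasurableSet (I n)
  isBounded : ∀ n, Bornology.IsBounded (I n)
  ratio_pos : ∀ i, 0 < ρ i
  mapsTo : ∀ i n, MapsTo (f i) (I n) (I (σ i n))
  dist_map : ∀ i n, ∀ x ∈ I n, ∀ y ∈ I n, dist (f i x) (f i y) = ρ i * dist x y
  injOn : InjOn (fun z : ι × X ↦ f z.1 z.2) (univ ×ˢ ⋃ n, I n)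

namespace IsPiecewiseSimilar

variable {f : ι → X → X} {ρ : ι → ℝ} {I : ℕ → Set X} {σ : ι → ℕ → ℕ}

theorem isSeparated (h : IsPiecewiseSimilar f ρ I σ) : IsSeparated f (⋃ n, I n) where
  mapsTo i := mapsTo_iUnion.2 fun n ↦ (h.mapsTo i n).mono_right (subset_iUnion I _)
  injOn := h.injOn

theorem ratio_prod_pos (h : IsPiecewiseSimilar f ρ I σ) {k : ℕ} (w : Fin k → ι) :
    0 < ∏ j, ρ (w j) :=
  Finset.prod_pos fun _ _ ↦ h.ratio_pos _

theorem dist_wordMap (h : IsPiecewiseSimilar f ρ I σ) {k : ℕ} (w : Fin k → ι) {n : ℕ} {x y : X}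
    (hx : x ∈ I n) (hy : y ∈ I n) :
    dist (wordMap f w x) (wordMap f w y) = (∏ j, ρ (w j)) * dist x y := by
  induction k generalizing n x y with
  | zero => simp [wordMap]
  | succ k ih =>
    rw [Fin.prod_univ_castSucc, mul_assoc, ← h.dist_map _ n x hx y hy]
    exact ih (Fin.init w) (h.mapsTo _ _ hx) (h.mapsTo _ _ hy)

theorem ediam_wordMap_image (h : IsPiecewiseSimilar f ρ I σ) {k : ℕ} (w : Fin k → ι) (n : ℕ) :
    ediam (wordMap f w '' I n) = ENNReal.ofReal (∏ j, ρ (w j)) * ediam (I n) := by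
  have h_edist {x y : X} (hx : x ∈ I n) (hy : y ∈ I n) : edist (wordMap f w x) (wordMap f w y) =
      ENNReal.ofReal (∏ j, ρ (w j)) * edist x y := by
    rw [edist_dist, h.dist_wordMap w hx hy, ENNReal.ofReal_mul (h.ratio_prod_pos w).le,
      ← edist_dist]
  simp only [ediam, iSup_image, ENNReal.mul_iSup]
  exact biSup_congr fun x hx ↦ biSup_congr fun y hy ↦ h_edist hx hy

theorem diam_wordMap_image (h : IsPiecewiseSimilar f ρ I σ) {k : ℕ} (w : Fin k → ι) (n : ℕ) :
    diam (wordMap f w '' I n) = (∏ j, ρ (w j)) * diam (I n) := by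
  rw [diam, h.ediam_wordMap_image, ENNReal.toReal_mul,
    ENNReal.toReal_ofReal (h.ratio_prod_pos w).le, diam]

theorem isBounded_wordMap_image (h : IsPiecewiseSimilar f ρ I σ) {k : ℕ} (w : Fin k → ι) (n : ℕ) :
    Bornology.IsBounded (wordMap f w '' I n) := by
  rw [isBounded_iff_ediam_ne_top, h.ediam_wordMap_image]
  exact mul_ne_top ofReal_ne_top (h.isBounded n).ediam_ne_top

theorem ediam_wordMap_image_rpow_le (h : IsPiecewiseSimilar f ρ I σ) {p : ι → ℝ}
    (hp : ∀ i, 0 < p i) {s : ℝ} (hs : 0 ≤ s) {γ : ℝ} (hγ : 0 < γ) {k : ℕ} {w : Fin k → ι}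
    (hw : ∏ j, ρ (w j) ^ s / p (w j) / γ ≤ 1) (n : ℕ) :
    ediam (wordMap f w '' I n) ^ s ≤
      ENNReal.ofReal (γ ^ k * ∏ j, p (w j)) * ediam (I n) ^ s := by
  have hp_prod : 0 < ∏ j, p (w j) := Finset.prod_pos fun _ _ ↦ hp _
  rw [Finset.prod_div_distrib, Finset.prod_div_distrib, Finset.prod_const, Finset.card_fin,
    Real.finsetProd_rpow _ _ fun _ _ ↦ (h.ratio_pos _).le, div_le_one (pow_pos hγ k),
    div_le_iff₀ hp_prod] at hw
  rw [h.ediam_wordMap_image, ENNReal.mul_rpow_of_nonneg _ _ hs,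
    ENNReal.ofReal_rpow_of_pos (h.ratio_prod_pos w)]
  gcongr

end IsPiecewiseSimilar

end PiecewiseSimilar

section UpperBound

variable {ι X : Type*}

theorem tsum_ofReal_pow_mul_prod [Fintype ι] {p : ι → ℝ} (hp : ∀ i, 0 ≤ p i)
    (hp_sum : ∑ i, p i = 1) {γ : ℝ} (hγ : 0 ≤ γ) :
    ∑' q : Σ k, Fin k → ι, ENNReal.ofReal (γ ^ q.1 * ∏ j, p (q.2 j)) =
      (1 - ENNReal.ofReal γ)⁻¹ := by
  have h_level (k : ℕ) : ∑' w : Fin k → ι, ENNReal.ofReal (γ ^ k * ∏ j, p (w j)) =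
      ENNReal.ofReal γ ^ k := by
    rw [tsum_fintype, ← ENNReal.ofReal_sum_of_nonneg fun w _ ↦
      mul_nonneg (pow_nonneg hγ k) (Finset.prod_nonneg fun _ _ ↦ hp _),
      ← Finset.mul_sum, ← Fintype.sum_pow, hp_sum, one_pow, mul_one, ENNReal.ofReal_pow hγ]
  rw [ENNReal.tsum_sigma', tsum_congr h_level, ENNReal.tsum_geometric]

theorem IsPiecewiseSimilar.dimH_setOf_frequently_mem_typicalSet_le [MetricSpace X]
    [MeasurableSpace X] [BorelSpace X] [Fintype ι] {f : ι → X → X} {p ρ : ι → ℝ} {I : ℕ → Set X}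
    {σ : ι → ℕ → ℕ} (h : IsPiecewiseSimilar f ρ I σ) (hp : ∀ i, 0 < p i) (hp_sum : ∑ i, p i = 1)
    {n : ℕ} {s : ℝ≥0} (hs : 0 < s) {γ : ℝ} (hγ : γ ∈ Ioo (0 : ℝ) 1) :
    dimH {x | ∃ᶠ k in atTop, x ∈ typicalSet f (fun i ↦ ρ i ^ (s : ℝ) / p i / γ) 1 k (I n)} ≤ s := by
  let goodWord : Type _ :=
    {q : Σ k, Fin k → ι // ∏ j, ρ (q.2 j) ^ (s : ℝ) / p (q.2 j) / γ ≤ 1}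
  have hD : ediam (I n) ^ (s : ℝ) ≠ ∞ :=
    ENNReal.rpow_ne_top_of_nonneg s.2 (h.isBounded n).ediam_ne_top
  have hγ' : (1 - ENNReal.ofReal γ)⁻¹ ≠ ∞ :=
    ENNReal.inv_ne_top.2 (tsub_pos_of_lt (ofReal_lt_one.2 hγ.2)).ne'
  have h_sum : ∑' q : goodWord, ediam (wordMap f q.1.2 '' I n) ^ (s : ℝ) ≠ ∞ := by
    refine ne_top_of_le_ne_top (mul_ne_top hγ' hD) ?_
    calc ∑' q : goodWord, ediam (wordMap f q.1.2 '' I n) ^ (s : ℝ)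
        ≤ ∑' q : goodWord, ENNReal.ofReal (γ ^ q.1.1 * ∏ j, p (q.1.2 j)) *
            ediam (I n) ^ (s : ℝ) :=
          ENNReal.tsum_le_tsum fun q ↦ h.ediam_wordMap_image_rpow_le hp s.2 hγ.1 q.2 n
      _ ≤ ∑' q : Σ k, Fin k → ι, ENNReal.ofReal (γ ^ q.1 * ∏ j, p (q.2 j)) *
            ediam (I n) ^ (s : ℝ) :=
          ENNReal.tsum_comp_le_tsum_of_injective Subtype.val_injective _
      _ = (1 - ENNReal.ofReal γ)⁻¹ * ediam (I n) ^ (s : ℝ) := by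
          rw [ENNReal.tsum_mul_right, tsum_ofReal_pow_mul_prod (fun i ↦ (hp i).le) hp_sum hγ.1.le]
  refine (dimH_mono fun x hx ↦ ?_).trans (dimH_setOf_infinite_mem_le hs h_sum)
  refine Set.Infinite.of_image (fun q : goodWord ↦ q.1.1) ?_
  refine (Nat.frequently_atTop_iff_infinite.1 hx).mono fun k hk ↦ ?_
  obtain ⟨w, hw, hxw⟩ := mem_iUnion₂.1 hk
  exact ⟨⟨⟨k, w⟩, hw⟩, hxw, rfl⟩

theorem setOf_frequently_mem_typicalSet_accumulate_subset (f : ι → X → X) (g : ι → ℝ)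
    (c : ℝ) (I : ℕ → Set X) (M : ℕ) :
    {x | ∃ᶠ k in atTop, x ∈ typicalSet f g c k (accumulate I M)} ⊆
      ⋃ n, {x | ∃ᶠ k in atTop, x ∈ typicalSet f g c k (I n)} := by
  refine fun x hx ↦ mem_iUnion.2 (by_contra fun hx_not ↦ ?_)
  have h_ev : ∀ n, ∀ᶠ k in atTop, x ∉ typicalSet f g c k (I n) :=
    fun n ↦ not_frequently.1 fun hn ↦ hx_not ⟨n, hn⟩
  refine hx (((finite_Iic M).eventually_all.2 fun n _ ↦ h_ev n).mono fun k hk hx_mem ↦ ?_)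
  obtain ⟨w, hw, y, hy, rfl⟩ := mem_iUnion₂.1 hx_mem
  obtain ⟨n, hnM, hyn⟩ := mem_accumulate.1 hy
  exact hk n hnM (mem_iUnion₂.2 ⟨w, hw, y, hyn, rfl⟩)

variable [Fintype ι] {p : ι → ℝ}

theorem IsStationary.measure_compl_iUnion_setOf_frequently_mem_typicalSet
    [MeasurableSpace X] [StandardBorelSpace X] {f : ι → X → X} {I : ℕ → Set X} {ν : Measure X}
    [IsProbabilityMeasure ν] (h : IsStationary f p ν) (hs : IsSeparated f (⋃ n, I n))
    (hI : ∀ n, MeasurableSet (I n)) (hU : ∀ᵐ x ∂ν, x ∈ ⋃ n, I n) {g : ι → ℝ}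
    (hg : ∀ i, 0 ≤ g i) {t : ℝ} (ht : 0 ≤ t) (hgt : ∑ i, p i * g i ^ t < 1) :
    ν (⋃ n, {x | ∃ᶠ k in atTop, x ∈ typicalSet f g 1 k (I n)})ᶜ = 0 := by
  have h_nonneg : 0 ≤ ∑ i, p i * g i ^ t :=
    Finset.sum_nonneg fun i _ ↦ mul_nonneg (h.pos i).le (Real.rpow_nonneg (hg i) t)
  have h_rate : Tendsto (fun k ↦ ENNReal.ofReal ((1 ^ t)⁻¹ * (∑ i, p i * g i ^ t) ^ k))
      atTop (𝓝 0) := by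
    simpa using ENNReal.tendsto_ofReal (tendsto_pow_atTop_nhds_zero_of_lt_one h_nonneg hgt)
  have h_meas (M : ℕ) : MeasurableSet (accumulate I M) :=
    .biUnion (finite_Iic M).countable fun n _ ↦ hI n
  refine le_zero_iff.1 <| ge_of_tendsto' (tendsto_measure_compl_accumulate hI hU) fun M ↦ ?_
  calc ν (⋃ n, {x | ∃ᶠ k in atTop, x ∈ typicalSet f g 1 k (I n)})ᶜ
      ≤ ν {x | ∀ᶠ k in atTop, x ∈ (typicalSet f g 1 k (accumulate I M))ᶜ} :=
        measure_mono fun x hx ↦ not_frequently.1 fun hx_freq ↦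
          hx (setOf_frequently_mem_typicalSet_accumulate_subset f g 1 I M hx_freq)
    _ ≤ liminf (fun k ↦ ν (typicalSet f g 1 k (accumulate I M))ᶜ) atTop :=
        measure_setOf_eventually_mem_le_liminf ν _
    _ ≤ liminf (fun k ↦ ν (accumulate I M)ᶜ +
          ENNReal.ofReal ((1 ^ t)⁻¹ * (∑ i, p i * g i ^ t) ^ k)) atTop :=
        liminf_le_liminf <| .of_forall fun k ↦ h.measure_compl_typicalSet_le hs hU
          (h_meas M) (accumulate_subset_iUnion M) hg ht one_pos k
    _ = ν (accumulate I M)ᶜ := by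
        simpa using (h_rate.const_add (ν (accumulate I M)ᶜ)).liminf_eq

theorem IsStationary.upperDimH_le [MetricSpace X] [MeasurableSpace X] [BorelSpace X]
    [StandardBorelSpace X] {f : ι → X → X} {ρ : ι → ℝ} {I : ℕ → Set X} {σ : ι → ℕ → ℕ}
    {ν : Measure X} [IsProbabilityMeasure ν] (h : IsStationary f p ν)
    (hI : IsPiecewiseSimilar f ρ I σ) (hU : ∀ᵐ x ∂ν, x ∈ ⋃ n, I n) {s : ℝ≥0} (hs : 0 < s)
    (h_lt : s * ∑ i, p i * Real.log (ρ i) < ∑ i, p i * Real.log (p i)) : upperDimH ν ≤ s := by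
  have hρs (i : ι) : 0 < ρ i ^ (s : ℝ) := Real.rpow_pos_of_pos (hI.ratio_pos i) _
  have h_ratio (i : ι) : 0 < ρ i ^ (s : ℝ) / p i := div_pos (hρs i) (h.pos i)
  have h_drift : ∑ i, p i * Real.log (ρ i ^ (s : ℝ) / p i) < 0 := by
    rw [sum_mul_log_div p hρs h.pos, sum_mul_log_rpow p hI.ratio_pos]
    exact sub_neg.2 h_lt
  obtain ⟨γ, hγ, t, ht, h_sum_lt⟩ := exists_sum_mul_div_rpow_lt_one h.sum_eq_one h_ratio h_drift
  refine (upperDimH_le_dimH <| h.measure_compl_iUnion_setOf_frequently_mem_typicalSet hI.isSeparated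
    hI.measurableSet hU (fun i ↦ div_nonneg (h_ratio i).le hγ.1.le) ht.le h_sum_lt).trans ?_
  rw [dimH_iUnion]
  exact iSup_le fun n ↦
    hI.dimH_setOf_frequently_mem_typicalSet_le h.pos h.sum_eq_one hs hγ

end UpperBound

section Cylinders

variable {ι X : Type*} [MetricSpace X] [MeasurableSpace X] {f : ι → X → X} {ρ : ι → ℝ}
  {I : ℕ → Set X} {σ : ι → ℕ → ℕ} {η θ ℓ : ℝ}

/-- The image of a piece `I n` under the map `i` occupies a proportion between `η > 0` and `θ < 1`
of the diameter of the piece `I (σ i n)` that contains it, and no piece has diameter below `ℓ > 0`.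
This makes the diameters of nested cylinders decrease geometrically, neither too fast nor too
slowly. -/
structure HasComparablePieces (ρ : ι → ℝ) (I : ℕ → Set X) (σ : ι → ℕ → ℕ) (η θ ℓ : ℝ) : Prop where
  lower_pos : 0 < η
  upper_mem : θ ∈ Ico 0 1
  diam_pos : 0 < ℓ
  le_diam : ∀ n, ℓ ≤ diam (I n)
  mul_diam_le : ∀ i n, ρ i * diam (I n) ≤ θ * diam (I (σ i n))
  le_mul_diam : ∀ i n, η * diam (I (σ i n)) ≤ ρ i * diam (I n)

namespace IsPiecewiseSimilar

theorem wordMap_image_subset (h : IsPiecewiseSimilar f ρ I σ) {k : ℕ} (w : Fin (k + 1) → ι)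
    (n : ℕ) : wordMap f w '' I n ⊆ wordMap f (Fin.init w) '' I (σ (w (Fin.last k)) n) :=
  wordMap_succ_image f w (I n) ▸ image_mono (h.mapsTo _ n).image_subset

theorem continuousOn_wordMap (h : IsPiecewiseSimilar f ρ I σ) {k : ℕ} (w : Fin k → ι) (n : ℕ) :
    ContinuousOn (wordMap f w) (I n) :=
  (LipschitzOnWith.of_dist_le_mul (K := ⟨_, (h.ratio_prod_pos w).le⟩)
    fun _ hx _ hy ↦ (h.dist_wordMap w hx hy).le).continuousOn

theorem diam_wordMap_image_le_mul (h : IsPiecewiseSimilar f ρ I σ)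
    (hc : HasComparablePieces ρ I σ η θ ℓ) {k : ℕ} (w : Fin (k + 1) → ι) (n : ℕ) :
    diam (wordMap f w '' I n) ≤
      θ * diam (wordMap f (Fin.init w) '' I (σ (w (Fin.last k)) n)) := by
  rw [h.diam_wordMap_image, h.diam_wordMap_image, Fin.prod_univ_castSucc, mul_assoc,
    mul_left_comm θ]
  exact mul_le_mul_of_nonneg_left (hc.mul_diam_le _ n) (h.ratio_prod_pos (Fin.init w)).le

theorem mul_le_diam_wordMap_image (h : IsPiecewiseSimilar f ρ I σ)
    (hc : HasComparablePieces ρ I σ η θ ℓ) {k : ℕ} (w : Fin (k + 1) → ι) (n : ℕ) :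
    η * diam (wordMap f (Fin.init w) '' I (σ (w (Fin.last k)) n)) ≤
      diam (wordMap f w '' I n) := by
  rw [h.diam_wordMap_image, h.diam_wordMap_image, Fin.prod_univ_castSucc, mul_assoc,
    mul_left_comm η]
  exact mul_le_mul_of_nonneg_left (hc.le_mul_diam _ n) (h.ratio_prod_pos (Fin.init w)).le

theorem diam_wordMap_image_le_pow_mul (h : IsPiecewiseSimilar f ρ I σ)
    (hc : HasComparablePieces ρ I σ η θ ℓ) (hI : Pairwise (Disjoint on I)) {x : X} {m : ℕ}
    (hx : x ∈ I m) {k : ℕ} {w : Fin k → ι} {n : ℕ} (hxw : x ∈ wordMap f w '' I n) :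
    diam (wordMap f w '' I n) ≤ θ ^ k * diam (I m) := by
  induction k generalizing n with
  | zero =>
    simp only [wordMap, image_id] at hxw
    obtain rfl : n = m := by_contra fun hne ↦ disjoint_left.1 (hI hne) hxw hx
    simp [wordMap]
  | succ k ih =>
    rw [pow_succ', mul_assoc]
    exact (h.diam_wordMap_image_le_mul hc w n).trans <|
      mul_le_mul_of_nonneg_left (ih (h.wordMap_image_subset w n hxw)) hc.upper_mem.1

theorem exists_mem_wordMap_image_diam_mem_Ico (h : IsPiecewiseSimilar f ρ I σ)
    (hc : HasComparablePieces ρ I σ η θ ℓ) (hI : Pairwise (Disjoint on I)) {x : X}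
    (hx : ∀ k, ∃ (w : Fin k → ι) (n : ℕ), x ∈ wordMap f w '' I n) {r : ℝ} (hr : r ∈ Ioc 0 ℓ) :
    ∃ (k : ℕ) (w : Fin k → ι) (n : ℕ),
      x ∈ wordMap f w '' I n ∧ diam (wordMap f w '' I n) ∈ Ico (η * r) r := by
  have h_small : ∃ k, ∃ (w : Fin k → ι) (n : ℕ),
      x ∈ wordMap f w '' I n ∧ diam (wordMap f w '' I n) < r := by
    obtain ⟨w₀, m, hm⟩ := hx 0
    have h_lim : Tendsto (fun k ↦ θ ^ k * diam (I m)) atTop (𝓝 0) := by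
      simpa using (tendsto_pow_atTop_nhds_zero_of_lt_one hc.upper_mem.1 hc.upper_mem.2).mul_const _
    obtain ⟨k, hk⟩ := (h_lim.eventually_lt_const hr.1).exists
    obtain ⟨w, n, hxw⟩ := hx k
    refine ⟨k, w, n, hxw, (h.diam_wordMap_image_le_pow_mul hc hI ?_ hxw).trans_lt hk⟩
    simpa only [wordMap, image_id] using hm
  obtain ⟨k, ⟨w, n, hxw, h_lt⟩, h_min⟩ := exists_minimal_of_wellFoundedLT _ h_small
  refine ⟨k, w, n, hxw, ?_, h_lt⟩
  cases k with
  | zero =>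
    refine absurd (hr.2.trans (hc.le_diam n)) (not_le.2 ?_)
    simpa only [wordMap, image_id] using h_lt
  | succ k =>
    have h_parent : r ≤ diam (wordMap f (Fin.init w) '' I (σ (w (Fin.last k)) n)) := not_lt.1
      fun h_lt' ↦ k.not_succ_le_self <|
        h_min ⟨Fin.init w, _, h.wordMap_image_subset w n hxw, h_lt'⟩ k.le_succ
    exact (mul_le_mul_of_nonneg_left h_parent hc.lower_pos.le).trans
      (h.mul_le_diam_wordMap_image hc w n)

end IsPiecewiseSimilar

end Cylinders

section LowerBound

theorem exists_int_add_mul_mem_of_lt_diam {J : Set ℝ} (hJ : IsPreconnected J) {δ : ℝ} (hδ : 0 < δ)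
    (hδJ : δ < diam J) (z : ℝ) : ∃ j : ℤ, z + j * δ ∈ J := by
  obtain ⟨a, ha, b, hb, hab⟩ : ∃ a ∈ J, ∃ b ∈ J, a + δ < b := by
    by_contra! h_le
    refine hδJ.not_ge (diam_le_of_forall_dist_le hδ.le fun x hx y hy ↦ ?_)
    rw [Real.dist_eq, abs_sub_le_iff]
    exact ⟨by linarith [h_le y hy x hx], by linarith [h_le x hx y hy]⟩
  obtain ⟨j, hj, -⟩ := existsUnique_add_zsmul_mem_Ico hδ z a
  rw [zsmul_eq_mul] at hj
  exact ⟨j, hJ.Icc_subset ha hb ⟨hj.1, (hj.2.trans hab).le⟩⟩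

variable {ι X : Type*}

/-- The union of the level-`k` cylinders of diameter below `r` and `g`-weight at most `c` that
contain the point `q`. In the lower bound, `q` runs over a grid of mesh comparable to `r`. -/
def smallTypicalCylinders [PseudoMetricSpace X] (f : ι → X → X) (g : ι → ℝ) (c : ℝ) (I : ℕ → Set X)
    (q : X) (r : ℝ) (k : ℕ) : Set X :=
  {x | ∃ w : Fin k → ι, ∏ j, g (w j) ≤ c ∧ ∃ n, diam (wordMap f w '' I n) < r ∧
    q ∈ wordMap f w '' I n ∧ x ∈ wordMap f w '' I n}

theorem prod_le_pow_mul_of_prod_div_rpow_le {p ρ : ι → ℝ} (hp : ∀ i, 0 ≤ p i)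
    (hρ : ∀ i, 0 < ρ i) {s γ c R : ℝ} (hs : 0 ≤ s) (hγ : 0 < γ) {k : ℕ} {w : Fin k → ι}
    (hw : ∏ j, p (w j) / ρ (w j) ^ s / γ ≤ c) (hR : ∏ j, ρ (w j) ≤ R) :
    ∏ j, p (w j) ≤ γ ^ k * (c * R ^ s) := by
  have hρ_prod : 0 < ∏ j, ρ (w j) := Finset.prod_pos fun _ _ ↦ hρ _
  have hc : 0 ≤ c := hw.trans' <| Finset.prod_nonneg fun _ _ ↦
    div_nonneg (div_nonneg (hp _) (Real.rpow_nonneg (hρ _).le s)) hγ.le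
  rw [Finset.prod_div_distrib, Finset.prod_div_distrib, Finset.prod_const, Finset.card_fin,
    Real.finsetProd_rpow _ _ fun _ _ ↦ (hρ _).le, div_le_iff₀ (pow_pos hγ k),
    div_le_iff₀ (Real.rpow_pos_of_pos hρ_prod s)] at hw
  calc ∏ j, p (w j) ≤ c * γ ^ k * (∏ j, ρ (w j)) ^ s := hw
    _ ≤ c * γ ^ k * R ^ s := by gcongr
    _ = γ ^ k * (c * R ^ s) := by ring

theorem IsPiecewiseSimilar.closedBall_inter_iInter_typicalSet_subset {f : ι → ℝ → ℝ} {ρ g : ι → ℝ}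
    {I : ℕ → Set ℝ} {σ : ι → ℕ → ℕ} {η θ ℓ c : ℝ} (h : IsPiecewiseSimilar f ρ I σ)
    (hc : HasComparablePieces ρ I σ η θ ℓ) (hI : ∀ n, IsPreconnected (I n))
    (h_disj : Pairwise (Disjoint on I)) (z : ℝ) {r : ℝ} (hr : r ∈ Ioc 0 ℓ) :
    closedBall z r ∩ ⋂ k, typicalSet f g c k (⋃ n, I n) ⊆
      ⋃ j ∈ Finset.Icc (-⌈4 / η⌉) ⌈4 / η⌉, ⋃ k,
        smallTypicalCylinders f g c I (z + j * (η * r / 2)) r k := by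
  rintro x ⟨hxz, hx⟩
  have hx_word (k : ℕ) : ∃ w : Fin k → ι, ∏ j, g (w j) ≤ c ∧ ∃ n, x ∈ wordMap f w '' I n := by
    obtain ⟨w, hw, y, hy, rfl⟩ := mem_iUnion₂.1 (mem_iInter.1 hx k)
    obtain ⟨n, hn⟩ := mem_iUnion.1 hy
    exact ⟨w, hw, n, y, hn, rfl⟩
  obtain ⟨k, w, n, hxw, h_diam⟩ := h.exists_mem_wordMap_image_diam_mem_Ico hc h_disj
    (fun k ↦ (hx_word k).imp fun _ ↦ And.right) hr
  have hw : ∏ j, g (w j) ≤ c := by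
    obtain ⟨w', hw', n', y', hy', rfl⟩ := hx_word k
    obtain ⟨y, hy, hyy'⟩ := hxw
    have h_word := h.isSeparated.eq_of_wordMap_eq (mem_iUnion_of_mem n hy)
      (mem_iUnion_of_mem n' hy') hyy'
    exact h_word.1 ▸ hw'
  have hηr : 0 < η * r := mul_pos hc.lower_pos hr.1
  obtain ⟨j, hj⟩ := exists_int_add_mul_mem_of_lt_diam
    ((hI n).image _ (h.continuousOn_wordMap w n)) (half_pos hηr)
    ((half_lt_self hηr).trans_le h_diam.1) z
  have hj_abs : |(j : ℝ)| ≤ 4 / η := by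
    have h_dist := (dist_le_diam_of_mem (h.isBounded_wordMap_image w n) hj hxw).trans h_diam.2.le
    have h_tri := (dist_triangle (z + j * (η * r / 2)) x z).trans
      (add_le_add h_dist (mem_closedBall.1 hxz))
    rw [dist_self_add_left, Real.norm_eq_abs, abs_mul, abs_of_pos (half_pos hηr)] at h_tri
    rw [le_div_iff₀ hc.lower_pos]
    exact le_of_mul_le_mul_right (by linarith) hr.1
  have hj_ceil : |j| ≤ ⌈4 / η⌉ := by exact_mod_cast hj_abs.trans (Int.le_ceil _)
  exact mem_iUnion₂.2 ⟨j, Finset.mem_Icc.2 (abs_le.1 hj_ceil),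
    mem_iUnion.2 ⟨k, w, hw, n, h_diam.2, hj, hxw⟩⟩

variable [Fintype ι]

theorem IsStationary.measure_smallTypicalCylinders_le [MetricSpace X] [MeasurableSpace X]
    [StandardBorelSpace X] {f : ι → X → X} {p ρ : ι → ℝ} {I : ℕ → Set X} {σ : ι → ℕ → ℕ}
    {ν : Measure X} [IsProbabilityMeasure ν] (h : IsStationary f p ν)
    (hI : IsPiecewiseSimilar f ρ I σ) (hU : ∀ᵐ x ∂ν, x ∈ ⋃ n, I n) {ℓ : ℝ} (hℓ : 0 < ℓ)
    (hℓI : ∀ n, ℓ ≤ diam (I n)) {s γ : ℝ} (hs : 0 ≤ s) (hγ : 0 < γ) (c : ℝ) (q : X) (r : ℝ)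
    (k : ℕ) :
    ν (smallTypicalCylinders f (fun i ↦ p i / ρ i ^ s / γ) c I q r k) ≤
      ENNReal.ofReal (γ ^ k * (c * (r / ℓ) ^ s)) := by
  obtain h_empty | ⟨x, w, hw, n, h_diam, ⟨y, hy, hyq⟩, -⟩ :=
    (smallTypicalCylinders f (fun i ↦ p i / ρ i ^ s / γ) c I q r k).eq_empty_or_nonempty
  · simp [h_empty]
  have h_sub : smallTypicalCylinders f (fun i ↦ p i / ρ i ^ s / γ) c I q r k ⊆
      wordMap f w '' ⋃ n, I n := by
    rintro x ⟨w', -, n', -, ⟨y', hy', hyq'⟩, hx⟩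
    obtain ⟨rfl, -⟩ := hI.isSeparated.eq_of_wordMap_eq (mem_iUnion_of_mem n' hy')
      (mem_iUnion_of_mem n hy) (hyq'.trans hyq.symm)
    exact image_mono (subset_iUnion I n') hx
  have h_ratio : ∏ j, ρ (w j) ≤ r / ℓ := by
    rw [hI.diam_wordMap_image] at h_diam
    rw [le_div_iff₀ hℓ]
    exact (mul_le_mul_of_nonneg_left (hℓI n) (hI.ratio_prod_pos w).le).trans h_diam.le
  calc ν (smallTypicalCylinders f (fun i ↦ p i / ρ i ^ s / γ) c I q r k)
      ≤ ENNReal.ofReal (∏ j, p (w j)) * ν (⋃ n, I n) :=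
        (measure_mono h_sub).trans_eq <| h.measure_wordMap_image hI.isSeparated hU
          (.iUnion hI.measurableSet) subset_rfl w
    _ ≤ ENNReal.ofReal (∏ j, p (w j)) := mul_le_of_le_one_right' prob_le_one
    _ ≤ ENNReal.ofReal (γ ^ k * (c * (r / ℓ) ^ s)) :=
        ofReal_le_ofReal <| prod_le_pow_mul_of_prod_div_rpow_le (fun i ↦ (h.pos i).le)
          hI.ratio_pos hs hγ hw h_ratio

theorem IsStationary.exists_measure_closedBall_inter_le {f : ι → ℝ → ℝ} {p ρ : ι → ℝ}
    {I : ℕ → Set ℝ} {σ : ι → ℕ → ℕ} {η θ ℓ : ℝ} {ν : Measure ℝ} [IsProbabilityMeasure ν]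
    (h : IsStationary f p ν) (hI : IsPiecewiseSimilar f ρ I σ)
    (hc : HasComparablePieces ρ I σ η θ ℓ) (hI_conn : ∀ n, IsPreconnected (I n))
    (h_disj : Pairwise (Disjoint on I)) (hU : ∀ᵐ x ∂ν, x ∈ ⋃ n, I n) {s γ : ℝ} (hs : 0 ≤ s)
    (hγ : γ ∈ Ioo 0 1) (c : ℝ) :
    ∃ K ≠ ∞, ∀ z, ∀ r ∈ Ioo 0 ℓ,
      ν (closedBall z r ∩ ⋂ k, typicalSet f (fun i ↦ p i / ρ i ^ s / γ) c k (⋃ n, I n)) ≤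
        K * ENNReal.ofReal r ^ s := by
  let gridIndices : Finset ℤ := Finset.Icc (-⌈4 / η⌉) ⌈4 / η⌉
  have hγ' : (1 - ENNReal.ofReal γ)⁻¹ ≠ ∞ :=
    ENNReal.inv_ne_top.2 (tsub_pos_of_lt (ofReal_lt_one.2 hγ.2)).ne'
  refine ⟨gridIndices.card * ((1 - ENNReal.ofReal γ)⁻¹ * ENNReal.ofReal (c / ℓ ^ s)),
    by finiteness, fun z r hr ↦ ?_⟩
  have h_pow : c * (r / ℓ) ^ s = c / ℓ ^ s * r ^ s := by
    rw [Real.div_rpow hr.1.le hc.diam_pos.le]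
    ring
  have h_grid (q : ℝ) : ν (⋃ k, smallTypicalCylinders f (fun i ↦ p i / ρ i ^ s / γ) c I q r k) ≤
      (1 - ENNReal.ofReal γ)⁻¹ * ENNReal.ofReal (c / ℓ ^ s) * ENNReal.ofReal r ^ s :=
    calc ν (⋃ k, smallTypicalCylinders f (fun i ↦ p i / ρ i ^ s / γ) c I q r k)
        ≤ ∑' k, ENNReal.ofReal (γ ^ k * (c * (r / ℓ) ^ s)) :=
          (measure_iUnion_le _).trans <| ENNReal.tsum_le_tsum <|
            h.measure_smallTypicalCylinders_le hI hU hc.diam_pos hc.le_diam hs hγ.1 c q r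
      _ = (1 - ENNReal.ofReal γ)⁻¹ * ENNReal.ofReal (c / ℓ ^ s) * ENNReal.ofReal r ^ s := by
          simp only [ENNReal.ofReal_mul (pow_nonneg hγ.1.le _), ENNReal.ofReal_pow hγ.1.le,
            ENNReal.tsum_mul_right, ENNReal.tsum_geometric, h_pow, mul_assoc,
            ENNReal.ofReal_mul' (Real.rpow_nonneg hr.1.le s), ENNReal.ofReal_rpow_of_pos hr.1]
  calc _ ≤ ∑ j ∈ gridIndices, ν (⋃ k, smallTypicalCylinders f (fun i ↦ p i / ρ i ^ s / γ) c I
          (z + j * (η * r / 2)) r k) :=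
        (measure_mono <| hI.closedBall_inter_iInter_typicalSet_subset hc hI_conn h_disj z
          ⟨hr.1, hr.2.le⟩).trans (measure_biUnion_finset_le _ _)
    _ ≤ _ := (Finset.sum_le_card_nsmul _ _ _ fun j _ ↦ h_grid _).trans_eq <| by
        simp only [nsmul_eq_mul, mul_assoc]

theorem IsStationary.exists_measure_compl_iInter_typicalSet_lt [MeasurableSpace X]
    [StandardBorelSpace X] {f : ι → X → X} {p : ι → ℝ} {U : Set X} {ν : Measure X}
    [IsProbabilityMeasure ν] (h : IsStationary f p ν) (hs : IsSeparated f U)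
    (hU_meas : MeasurableSet U) (hU : ∀ᵐ x ∂ν, x ∈ U) {g : ι → ℝ} (hg : ∀ i, 0 ≤ g i) {t : ℝ}
    (ht : 0 < t) (hgt : ∑ i, p i * g i ^ t < 1) {ε : ℝ≥0∞} (hε : 0 < ε) :
    ∃ c, ν (⋂ k, typicalSet f g c k U)ᶜ < ε := by
  set a : ℝ := ∑ i, p i * g i ^ t
  have ha_nonneg : 0 ≤ a :=
    Finset.sum_nonneg fun i _ ↦ mul_nonneg (h.pos i).le (Real.rpow_nonneg (hg i) t)
  have h_geom : (1 - ENNReal.ofReal a)⁻¹ ≠ ∞ :=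
    ENNReal.inv_ne_top.2 (tsub_pos_of_lt (ofReal_lt_one.2 hgt)).ne'
  have h_le {c : ℝ} (hc : 0 < c) : ν (⋂ k, typicalSet f g c k U)ᶜ ≤
      ENNReal.ofReal (c ^ t)⁻¹ * (1 - ENNReal.ofReal a)⁻¹ :=
    calc ν (⋂ k, typicalSet f g c k U)ᶜ
        ≤ ∑' k, ENNReal.ofReal ((c ^ t)⁻¹ * a ^ k) := by
          rw [compl_iInter]
          refine (measure_iUnion_le _).trans (ENNReal.tsum_le_tsum fun k ↦ ?_)
          simpa [show ν Uᶜ = 0 from hU] using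
            h.measure_compl_typicalSet_le hs hU hU_meas subset_rfl hg ht.le hc k
      _ = ENNReal.ofReal (c ^ t)⁻¹ * (1 - ENNReal.ofReal a)⁻¹ := by
          simp only [ENNReal.ofReal_mul' (pow_nonneg ha_nonneg _), ENNReal.ofReal_pow ha_nonneg,
            ENNReal.tsum_mul_left, ENNReal.tsum_geometric]
  have h_lim : Tendsto (fun c : ℝ ↦ ENNReal.ofReal (c ^ t)⁻¹ * (1 - ENNReal.ofReal a)⁻¹) atTop
      (𝓝 0) := by
    simpa using ENNReal.Tendsto.mul_const
      (ENNReal.tendsto_ofReal (_root_.tendsto_rpow_atTop ht).inv_tendsto_atTop) (.inr h_geom)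
  obtain ⟨c, hc, hc_lt⟩ :=
    ((eventually_gt_atTop 0).and (h_lim.eventually_lt_const hε)).exists
  exact ⟨c, (h_le hc).trans_lt hc_lt⟩

variable {f : ι → ℝ → ℝ} {p ρ : ι → ℝ} {I : ℕ → Set ℝ} {σ : ι → ℕ → ℕ} {η θ ℓ : ℝ} {ν : Measure ℝ}
  [IsProbabilityMeasure ν]

theorem IsStationary.le_lowerDimH (h : IsStationary f p ν) (hI : IsPiecewiseSimilar f ρ I σ)
    (hc : HasComparablePieces ρ I σ η θ ℓ) (hI_conn : ∀ n, IsPreconnected (I n))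
    (h_disj : Pairwise (Disjoint on I)) (hU : ∀ᵐ x ∂ν, x ∈ ⋃ n, I n) {s : ℝ≥0}
    (h_lt : ∑ i, p i * Real.log (p i) < s * ∑ i, p i * Real.log (ρ i)) : s ≤ lowerDimH ν := by
  have hρs (i : ι) : 0 < ρ i ^ (s : ℝ) := Real.rpow_pos_of_pos (hI.ratio_pos i) _
  have h_ratio (i : ι) : 0 < p i / ρ i ^ (s : ℝ) := div_pos (h.pos i) (hρs i)
  have h_drift : ∑ i, p i * Real.log (p i / ρ i ^ (s : ℝ)) < 0 := by
    rw [sum_mul_log_div p h.pos hρs, sum_mul_log_rpow p hI.ratio_pos]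
    exact sub_neg.2 h_lt
  obtain ⟨γ, hγ, t, ht, h_sum_lt⟩ := exists_sum_mul_div_rpow_lt_one h.sum_eq_one h_ratio h_drift
  refine le_iInf₂ fun A hA ↦ ?_
  have hU_meas : MeasurableSet (⋃ n, I n) := .iUnion hI.measurableSet
  obtain ⟨c, h_compl⟩ := h.exists_measure_compl_iInter_typicalSet_lt hI.isSeparated hU_meas hU
    (fun i ↦ div_nonneg (h_ratio i).le hγ.1.le) ht h_sum_lt hA
  obtain ⟨K, hK, h_ball⟩ :=
    h.exists_measure_closedBall_inter_le hI hc hI_conn h_disj hU s.2 hγ c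
  refine le_dimH_of_measure_closedBall_inter_le
    (.iInter fun k ↦ h.measurableSet_typicalSet hI.isSeparated hU_meas subset_rfl c k)
    hK hc.diam_pos h_ball fun h_null ↦ h_compl.not_ge ?_
  rw [← measure_sdiff_null' h_null]
  exact measure_mono (sdiff_subset_compl _ _)

theorem IsStationary.lowerDimH_eq_upperDimH_and_upperDimH_eq (h : IsStationary f p ν)
    (hI : IsPiecewiseSimilar f ρ I σ) (hc : HasComparablePieces ρ I σ η θ ℓ)
    (hI_conn : ∀ n, IsPreconnected (I n)) (h_disj : Pairwise (Disjoint on I))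
    (hU : ∀ᵐ x ∂ν, x ∈ ⋃ n, I n) (hρ : ∑ i, p i * Real.log (ρ i) < 0) :
    lowerDimH ν = upperDimH ν ∧ upperDimH ν =
      ENNReal.ofReal ((∑ i, p i * Real.log (p i)) / ∑ i, p i * Real.log (ρ i)) := by
  have h_le : upperDimH ν ≤
      ENNReal.ofReal ((∑ i, p i * Real.log (p i)) / ∑ i, p i * Real.log (ρ i)) := by
    refine le_of_forall_gt_imp_ge_of_dense fun a ha ↦ ?_
    obtain ⟨s, hs, hsa⟩ := ENNReal.lt_iff_exists_nnreal_btwn.1 ha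
    refine (h.upperDimH_le hI hU (ENNReal.coe_pos.1 (pos_of_gt hs)) ?_).trans hsa.le
    rw [← div_lt_iff_of_neg hρ]
    exact (Real.le_coe_toNNReal _).trans_lt (NNReal.coe_lt_coe.2 (ENNReal.coe_lt_coe.1 hs))
  have h_ge : ENNReal.ofReal ((∑ i, p i * Real.log (p i)) / ∑ i, p i * Real.log (ρ i)) ≤
      lowerDimH ν := by
    refine ENNReal.le_of_forall_nnreal_lt fun s hs ↦ ?_
    refine h.le_lowerDimH hI hc hI_conn h_disj hU ?_
    exact (lt_div_iff_of_neg hρ).1 (coe_lt_ofReal.1 hs)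
  have h_eq := (lowerDimH_le_upperDimH ν).antisymm (h_le.trans h_ge)
  exact ⟨h_eq, h_le.antisymm (h_ge.trans h_eq.le)⟩

end LowerBound

section Decades

/-- The interval `B_n` of the example. -/
def decade (n : ℕ) : Set ℝ :=
  Ioo (10 ^ n) (3 * 10 ^ n)

theorem ten_pow_lt_iff_of_mem_decade {m n : ℕ} {x : ℝ} (hx : x ∈ decade m) :
    10 ^ n < x ↔ n ≤ m := by
  refine ⟨fun h_lt ↦ ?_, fun hnm ↦ (pow_le_pow_right₀ (by norm_num) hnm).trans_lt hx.1⟩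
  by_contra! hmn
  have h_pow : (10 : ℝ) ^ (m + 1) ≤ 10 ^ n := pow_le_pow_right₀ (by norm_num) hmn
  rw [pow_succ] at h_pow
  linarith [hx.2, pow_pos (show (0 : ℝ) < 10 by norm_num) m]

theorem pairwise_disjoint_decade : Pairwise (Disjoint on decade) := fun _ _ hmn ↦
  disjoint_left.2 fun _ hm hn ↦ hmn <| le_antisymm
    ((ten_pow_lt_iff_of_mem_decade hn).1 hm.1) ((ten_pow_lt_iff_of_mem_decade hm).1 hn.1)

theorem diam_decade (n : ℕ) : diam (decade n) = 2 * 10 ^ n := by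
  rw [decade, Real.diam_Ioo (by linarith [pow_pos (show (0 : ℝ) < 10 by norm_num) n])]
  ring

/-- The maps of the example: `h₁` moves every decade but the first one down by one, `h₂` moves every
decade up by one, and both are affine on each decade. -/
structure IsDecadeSystem (h₁ h₂ : ℝ → ℝ) : Prop where
  strictMono_left : StrictMono h₁
  measurable_right : Measurable h₂
  left_of_mem : ∀ n, 0 < n → ∀ x ∈ decade n, h₁ x = x / 20 + 15 * 10 ^ n / 100
  left_of_le : ∀ x ≤ 3, h₁ x = x / 20 + 1
  right_of_mem : ∀ n, ∀ x ∈ decade n, h₂ x = 5 * x + 5 * 10 ^ n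

namespace IsDecadeSystem

variable {h₁ h₂ : ℝ → ℝ}

theorem left_of_mem_zero (h : IsDecadeSystem h₁ h₂) {x : ℝ} (hx : x ∈ decade 0) :
    h₁ x = x / 20 + 1 :=
  h.left_of_le x (by simpa using hx.2.le)

theorem left_mem_Ioo (h : IsDecadeSystem h₁ h₂) {n : ℕ} {x : ℝ} (hx : x ∈ decade (n + 1)) :
    h₁ x ∈ Ioo (2 * 10 ^ n : ℝ) (3 * 10 ^ n) := by
  obtain ⟨h_lower, h_upper⟩ := hx
  rw [h.left_of_mem _ n.succ_pos x ⟨h_lower, h_upper⟩]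
  rw [pow_succ] at h_lower h_upper ⊢
  constructor <;> linarith

theorem right_mem_Ioo (h : IsDecadeSystem h₁ h₂) {n : ℕ} {x : ℝ} (hx : x ∈ decade n) :
    h₂ x ∈ Ioo (10 ^ (n + 1) : ℝ) (2 * 10 ^ (n + 1)) := by
  rw [h.right_of_mem n x hx, pow_succ]
  constructor <;> linarith [hx.1, hx.2]

theorem mapsTo_left (h : IsDecadeSystem h₁ h₂) : ∀ n, MapsTo h₁ (decade n) (decade (n - 1))
  | 0, x, hx => by
    rw [h.left_of_mem_zero hx]
    simp only [decade, pow_zero, mem_Ioo] at hx ⊢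
    constructor <;> linarith
  | n + 1, _, hx =>
    have h_pos : (0 : ℝ) < 10 ^ n := by positivity
    ⟨(show (10 : ℝ) ^ n < 2 * 10 ^ n by linarith).trans (h.left_mem_Ioo hx).1,
      (h.left_mem_Ioo hx).2⟩

theorem mapsTo_right (h : IsDecadeSystem h₁ h₂) (n : ℕ) :
    MapsTo h₂ (decade n) (decade (n + 1)) := fun _ hx ↦
  have h_pos : (0 : ℝ) < 10 ^ (n + 1) := by positivity
  ⟨(h.right_mem_Ioo hx).1, by linarith [(h.right_mem_Ioo hx).2]⟩

theorem injOn_right (h : IsDecadeSystem h₁ h₂) : InjOn h₂ (⋃ n, decade n) := by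
  rintro x hx y hy hxy
  obtain ⟨m, hm⟩ := mem_iUnion.1 hx
  obtain ⟨n, hn⟩ := mem_iUnion.1 hy
  obtain rfl : m = n := by
    by_contra hmn
    exact disjoint_left.1 (pairwise_disjoint_decade fun h_succ ↦ hmn (Nat.succ_injective h_succ))
      (h.mapsTo_right m hm) (hxy ▸ h.mapsTo_right n hn)
  rw [h.right_of_mem m x hm, h.right_of_mem m y hn] at hxy
  linarith

theorem left_ne_right (h : IsDecadeSystem h₁ h₂) {x y : ℝ} (hx : x ∈ ⋃ n, decade n)
    (hy : y ∈ ⋃ n, decade n) : h₁ x ≠ h₂ y := by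
  intro hxy
  obtain ⟨m, hm⟩ := mem_iUnion.1 hx
  obtain ⟨n, hn⟩ := mem_iUnion.1 hy
  have h_level : m - 1 = n + 1 := by_contra fun h_ne ↦
    disjoint_left.1 (pairwise_disjoint_decade h_ne) (h.mapsTo_left m hm)
      (hxy ▸ h.mapsTo_right n hn)
  obtain rfl : m = n + 1 + 1 := by lia
  exact lt_asymm (h.left_mem_Ioo hm).1 (hxy ▸ (h.right_mem_Ioo hn).2)

theorem isPiecewiseSimilar (h : IsDecadeSystem h₁ h₂) :
    IsPiecewiseSimilar ![h₁, h₂] ![1 / 20, 5] decade ![fun n ↦ n - 1, fun n ↦ n + 1] where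
  measurableSet _ := measurableSet_Ioo
  isBounded _ := isBounded_Ioo _ _
  ratio_pos := Fin.forall_fin_two.2 ⟨by norm_num, by norm_num⟩
  mapsTo := Fin.forall_fin_two.2 ⟨h.mapsTo_left, h.mapsTo_right⟩
  dist_map := by
    refine Fin.forall_fin_two.2 ⟨fun n x hx y hy ↦ ?_, fun n x hx y hy ↦ ?_⟩
    · have h_sub : h₁ x - h₁ y = 1 / 20 * (x - y) := by
        obtain rfl | hn := n.eq_zero_or_pos
        · rw [h.left_of_mem_zero hx, h.left_of_mem_zero hy]
          ring
        · rw [h.left_of_mem n hn x hx, h.left_of_mem n hn y hy]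
          ring
      simp [Real.dist_eq, h_sub, abs_mul]
    · have h_sub : h₂ x - h₂ y = 5 * (x - y) := by
        rw [h.right_of_mem n x hx, h.right_of_mem n y hy]
        ring
      simp [Real.dist_eq, h_sub, abs_mul]
  injOn := by
    rintro ⟨i, x⟩ ⟨-, hx⟩ ⟨j, y⟩ ⟨-, hy⟩ hxy
    fin_cases i <;> fin_cases j
    · exact Prod.ext rfl (h.strictMono_left.injective hxy)
    · exact (h.left_ne_right hx hy hxy).elim
    · exact (h.left_ne_right hy hx hxy.symm).elim
    · exact Prod.ext rfl (h.injOn_right hx hy hxy)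

theorem left_lt_of_lt (h : IsDecadeSystem h₁ h₂) {n : ℕ} {x : ℝ} (hx : x < 3 * 10 ^ (n + 1)) :
    h₁ x < 3 * 10 ^ n := by
  have h_pos : (0 : ℝ) < 10 ^ (n + 1) := by positivity
  have h_mem : max x (2 * 10 ^ (n + 1)) ∈ decade (n + 1) :=
    ⟨lt_max_of_lt_right (by linarith), max_lt hx (by linarith)⟩
  exact (h.strictMono_left.monotone (le_max_left _ _)).trans_lt (h.left_mem_Ioo h_mem).2

theorem exists_left_iterate_lt_three (h : IsDecadeSystem h₁ h₂) (x : ℝ) :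
    ∃ k, h₁^[k] x < 3 := by
  obtain ⟨n, hn⟩ := pow_unbounded_of_one_lt x (show (1 : ℝ) < 10 by norm_num)
  have hx : x < 3 * 10 ^ n := by linarith [pow_pos (show (0 : ℝ) < 10 by norm_num) n]
  clear hn
  induction n generalizing x with
  | zero => exact ⟨0, by simpa using hx⟩
  | succ n ih =>
    obtain ⟨k, hk⟩ := ih (h₁ x) (h.left_lt_of_lt hx)
    exact ⟨k + 1, hk⟩

theorem left_iterate_of_le_three (h : IsDecadeSystem h₁ h₂) {x : ℝ} (hx : x ≤ 3) (k : ℕ) :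
    h₁^[k] x = 20 / 19 + (1 / 20) ^ k * (x - 20 / 19) := by
  induction k generalizing x with
  | zero => simp
  | succ k ih =>
    rw [iterate_succ_apply, h.left_of_le x hx, ih (by linarith)]
    ring

theorem exists_left_iterate_mem (h : IsDecadeSystem h₁ h₂) (x : ℝ) :
    ∃ k, h₁^[k] x ∈ ⋃ n, decade n := by
  obtain ⟨k, hk⟩ := h.exists_left_iterate_lt_three x
  have h_lim : Tendsto (fun l ↦ h₁^[l] (h₁^[k] x)) atTop (𝓝 (20 / 19)) := by
    simp only [h.left_iterate_of_le_three hk.le]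
    simpa using ((tendsto_pow_atTop_nhds_zero_of_lt_one (r := (1 / 20 : ℝ)) (by norm_num)
      (by norm_num)).mul_const (h₁^[k] x - 20 / 19)).const_add (20 / 19)
  have h_nhds : decade 0 ∈ 𝓝 (20 / 19) := Ioo_mem_nhds (by norm_num) (by norm_num)
  obtain ⟨l, hl⟩ := (h_lim.eventually h_nhds).exists
  exact ⟨l + k, mem_iUnion_of_mem 0 (iterate_add_apply h₁ l k x ▸ hl)⟩

end IsDecadeSystem

theorem hasComparablePieces_decade :
    HasComparablePieces ![1 / 20, 5] decade ![fun n ↦ n - 1, fun n ↦ n + 1]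
      (1 / 20) (1 / 2) 2 where
  lower_pos := by norm_num
  upper_mem := by constructor <;> norm_num
  diam_pos := by norm_num
  le_diam n := by
    rw [diam_decade]
    linarith [one_le_pow₀ (show (1 : ℝ) ≤ 10 by norm_num) (n := n)]
  mul_diam_le := by
    refine Fin.forall_fin_two.2 ⟨?_, fun n ↦ ?_⟩
    · rintro (_ | n)
      · norm_num [diam_decade]
      · simp only [diam_decade, Matrix.cons_val_zero, Nat.add_sub_cancel, pow_succ]
        linarith
    · simp only [diam_decade, Matrix.cons_val_one, Matrix.cons_val_fin_one, pow_succ]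
      linarith
  le_mul_diam := by
    have h_pos (n : ℕ) : (0 : ℝ) < 10 ^ n := by positivity
    refine Fin.forall_fin_two.2 ⟨?_, fun n ↦ ?_⟩
    · rintro (_ | n)
      · norm_num [diam_decade]
      · simp only [diam_decade, Matrix.cons_val_zero, Nat.add_sub_cancel, pow_succ]
        linarith [h_pos n]
    · simp only [diam_decade, Matrix.cons_val_one, Matrix.cons_val_fin_one, pow_succ]
      linarith [h_pos n]

end Decades

section InvariantMeasure

theorem tendsto_measureReal_Ioi_atTop (μ : Measure ℝ) [IsFiniteMeasure μ] :
    Tendsto (fun x ↦ μ.real (Ioi x)) atTop (𝓝 0) := by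
  have h_Iic : Tendsto (fun x ↦ μ.real (Iic x)) atTop (𝓝 (μ.real univ)) :=
    (ENNReal.tendsto_toReal (measure_ne_top μ univ)).comp (tendsto_measure_Iic_atTop μ)
  simpa [← compl_Iic, measureReal_compl measurableSet_Iic] using h_Iic.const_sub (μ.real univ)

variable {h₁ h₂ : ℝ → ℝ} {p₁ p₂ : ℝ} {ν : Measure ℝ}

theorem IsDecadeSystem.isStationary (h : IsDecadeSystem h₁ h₂) (hp₁ : 0 < p₁) (hp₂ : 0 < p₂)
    (hp : p₁ + p₂ = 1)
    (hν : ν = ENNReal.ofReal p₁ • ν.map h₁ + ENNReal.ofReal p₂ • ν.map h₂) :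
    IsStationary ![h₁, h₂] ![p₁, p₂] ν where
  measurable := Fin.forall_fin_two.2 ⟨h.strictMono_left.monotone.measurable, h.measurable_right⟩
  pos := Fin.forall_fin_two.2 ⟨hp₁, hp₂⟩
  sum_eq_one := by simpa using hp
  eq_sum_map := by simpa using hν

variable [IsProbabilityMeasure ν]

theorem IsDecadeSystem.ae_mem_iUnion_decade (h : IsDecadeSystem h₁ h₂)
    (hν : IsStationary ![h₁, h₂] ![p₁, p₂] ν) : ∀ᵐ x ∂ν, x ∈ ⋃ n, decade n :=
  hν.ae_mem_of_forall_exists_iterate_mem (i := 0) (.iUnion h.isPiecewiseSimilar.measurableSet)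
    h.isPiecewiseSimilar.isSeparated.mapsTo h.exists_left_iterate_mem

theorem IsDecadeSystem.measureReal_Ioi_ten_pow_succ (h : IsDecadeSystem h₁ h₂)
    (hν : IsStationary ![h₁, h₂] ![p₁, p₂] ν) (n : ℕ) :
    ν.real (Ioi (10 ^ (n + 1))) =
      p₁ * ν.real (Ioi (10 ^ (n + 2))) + p₂ * ν.real (Ioi (10 ^ n)) := by
  have h_left : h₁ ⁻¹' Ioi (10 ^ (n + 1)) =ᵐ[ν] Ioi (10 ^ (n + 2)) := by
    filter_upwards [h.ae_mem_iUnion_decade hν] with x hx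
    obtain ⟨m, hm⟩ := mem_iUnion.1 hx
    refine propext ((ten_pow_lt_iff_of_mem_decade (h.mapsTo_left m hm)).trans ?_)
    exact Iff.trans (by lia) (ten_pow_lt_iff_of_mem_decade hm).symm
  have h_right : h₂ ⁻¹' Ioi (10 ^ (n + 1)) =ᵐ[ν] Ioi (10 ^ n) := by
    filter_upwards [h.ae_mem_iUnion_decade hν] with x hx
    obtain ⟨m, hm⟩ := mem_iUnion.1 hx
    refine propext ((ten_pow_lt_iff_of_mem_decade (h.mapsTo_right m hm)).trans ?_)
    exact Iff.trans (by lia) (ten_pow_lt_iff_of_mem_decade hm).symm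
  rw [hν.measureReal_eq_sum measurableSet_Ioi, Fin.sum_univ_two]
  exact congrArg₂ (p₁ * · + p₂ * ·) (measureReal_congr h_left) (measureReal_congr h_right)

theorem IsDecadeSystem.right_le_left_of_isStationary (h : IsDecadeSystem h₁ h₂)
    (hν : IsStationary ![h₁, h₂] ![p₁, p₂] ν) : p₂ ≤ p₁ := by
  have hp : p₁ + p₂ = 1 := by simpa using hν.sum_eq_one
  have hp₁ : 0 < p₁ := hν.pos 0
  -- Invariance means that no net mass flows from one decade to the next.
  let flux (n : ℕ) : ℝ := p₁ * ν.real (Ioi (10 ^ (n + 1))) - p₂ * ν.real (Ioi (10 ^ n))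
  have h_succ (n : ℕ) : flux (n + 1) = flux n := by
    have h_split := h.measureReal_Ioi_ten_pow_succ hν n
    simp only [flux]
    linear_combination -h_split - hp * ν.real (Ioi (10 ^ (n + 1)))
  have h_const (n : ℕ) : flux n = flux 0 := by
    induction n with
    | zero => rfl
    | succ n ih => rw [h_succ, ih]
  have h_tail : Tendsto (fun n : ℕ ↦ ν.real (Ioi (10 ^ n))) atTop (𝓝 0) :=
    (tendsto_measureReal_Ioi_atTop ν).comp (tendsto_pow_atTop_atTop_of_one_lt (by norm_num))
  have h_lim : Tendsto flux atTop (𝓝 0) := by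
    simpa using (((tendsto_add_atTop_iff_nat 1).2 h_tail).const_mul p₁).sub (h_tail.const_mul p₂)
  have h_zero : flux 0 = 0 :=
    tendsto_nhds_unique (tendsto_const_nhds.congr fun n ↦ (h_const n).symm) h_lim
  have h_full : ν.real (Ioi (10 ^ 0)) = 1 := by
    have h_ae : ∀ᵐ x ∂ν, x ∈ Ioi (10 ^ 0) := by
      filter_upwards [h.ae_mem_iUnion_decade hν] with x hx
      obtain ⟨m, hm⟩ := mem_iUnion.1 hx
      exact (ten_pow_lt_iff_of_mem_decade hm).2 m.zero_le
    rw [measureReal_def, (mem_ae_iff_prob_eq_one measurableSet_Ioi).1 h_ae, ENNReal.toReal_one]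
  calc p₂ = p₁ * ν.real (Ioi (10 ^ (0 + 1))) := by
        simp only [flux, h_full] at h_zero
        linarith
    _ ≤ p₁ := mul_le_of_le_one_right hp₁.le measureReal_le_one

theorem sum_mul_log_ratio (p₁ p₂ : ℝ) :
    ∑ i, ![p₁, p₂] i * Real.log (![1 / 20, 5] i) =
      -2 * p₁ * Real.log 2 - (p₁ - p₂) * Real.log 5 := by
  have h_twenty : Real.log 20 = 2 * Real.log 2 + Real.log 5 := by
    rw [show (20 : ℝ) = 2 ^ 2 * 5 by norm_num, Real.log_mul (by norm_num) (by norm_num),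
      Real.log_pow]
    norm_num
  simp only [Fin.sum_univ_two, Matrix.cons_val_zero, Matrix.cons_val_one, Matrix.cons_val_fin_one,
    one_div, Real.log_inv, h_twenty]
  ring

theorem IsDecadeSystem.sum_mul_log_ratio_neg (h : IsDecadeSystem h₁ h₂)
    (hν : IsStationary ![h₁, h₂] ![p₁, p₂] ν) :
    ∑ i, ![p₁, p₂] i * Real.log (![1 / 20, 5] i) < 0 := by
  have h_le := h.right_le_left_of_isStationary hν
  have hp₁ : 0 < p₁ := hν.pos 0
  have h_two : 0 < Real.log 2 := Real.log_pos (by norm_num)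
  have h_five : 0 < Real.log 5 := Real.log_pos (by norm_num)
  rw [sum_mul_log_ratio]
  nlinarith [mul_pos hp₁ h_two, mul_nonneg (sub_nonneg.2 h_le) h_five.le]

end InvariantMeasure

end MarkovIFS

theorem example_dimension_general (h₁ h₂ : ℝ → ℝ) (h_mono : StrictMono h₁) (h_meas : Measurable h₂)
    (hf₁ : ∀ n : ℕ, 0 < n → ∀ x ∈ Set.Ioo ((10 : ℝ) ^ n) (3 * 10 ^ n),
      h₁ x = x / 20 + 15 * 10 ^ n / 100)
    (hf₁' : ∀ x : ℝ, x ≤ 3 → h₁ x = x / 20 + 1)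
    (hf₂ : ∀ n : ℕ, ∀ x ∈ Set.Ioo ((10 : ℝ) ^ n) (3 * 10 ^ n), h₂ x = 5 * x + 5 * 10 ^ n)
    (p₁ p₂ : ℝ) (hp₂ : p₂ = 1 - p₁) (hp₁0 : 0 < p₁) (hp₁1 : p₁ < 1)
    (ν : Measure ℝ) [IsProbabilityMeasure ν]
    (hinv : ν = ENNReal.ofReal p₁ • Measure.map h₁ ν + ENNReal.ofReal p₂ • Measure.map h₂ ν) :
    lowerDimH ν = upperDimH ν ∧
    upperDimH ν = ENNReal.ofReal
      ((p₁ * Real.log p₁ + p₂ * Real.log p₂) /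
        (-2 * p₁ * Real.log 2 - (p₁ - p₂) * Real.log 5)) := by
  have h : MarkovIFS.IsDecadeSystem h₁ h₂ := ⟨h_mono, h_meas, hf₁, hf₁', hf₂⟩
  have hν := h.isStationary hp₁0 (by linarith) (by linarith) hinv
  have h_dim := hν.lowerDimH_eq_upperDimH_and_upperDimH_eq h.isPiecewiseSimilar
    MarkovIFS.hasComparablePieces_decade (fun _ ↦ isPreconnected_Ioo)
    MarkovIFS.pairwise_disjoint_decade (h.ae_mem_iUnion_decade hν)
    (h.sum_mul_log_ratio_neg hν)
  rwa [MarkovIFS.sum_mul_log_ratio, Fin.sum_univ_two] at h_dim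

/-- The example: an IFS of two homeomorphisms of `ℝ`, piecewise affine on the union of
the intervals `B_n = (10^n, 3·10^n)`, whose invariant measure has Hausdorff dimension
`(p₁ log p₁ + p₂ log p₂) / (−2 p₁ log 2 − (p₁ − p₂) log 5)`. -/
theorem example_dimension
    (h₁ h₂ : Homeomorph ℝ ℝ)
    (hf₁ : ∀ n : ℕ, 0 < n → ∀ x ∈ Set.Ioo ((10 : ℝ) ^ n) (3 * 10 ^ n),
      h₁ x = x / 20 + 15 * 10 ^ n / 100)
    (hf₁' : ∀ x : ℝ, x ≤ 3 → h₁ x = x / 20 + 1)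
    (hf₂ : ∀ n : ℕ, 0 < n → ∀ x ∈ Set.Ioo ((10 : ℝ) ^ n) (3 * 10 ^ n),
      h₂ x = 5 * x + 5 * 10 ^ n)
    (hf₂' : ∀ x : ℝ, x ≤ 3 → h₂ x = 5 * x + 5)
    -- constant probabilities
    (p₁ p₂ : ℝ) (hp₂ : p₂ = 1 - p₁) (hp₁0 : 0 < p₁) (hp₁1 : p₁ < 1)
    (hp₁big : Real.log (50 / 7) / Real.log (500 / 17) < p₁)
    -- the system is contracting on average on all of ℝ
    (hcoa : ∃ b > (0 : ℝ), ∀ x y : ℝ, x ≠ y →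
      p₁ * Real.log (|h₁ x - h₁ y| / |x - y|) +
        p₂ * Real.log (|h₂ x - h₂ y| / |x - y|) < -b)
    -- the (unique) invariant probability measure
    (ν : Measure ℝ) [IsProbabilityMeasure ν]
    (hinv : ν = ENNReal.ofReal p₁ • Measure.map (⇑h₁) ν +
      ENNReal.ofReal p₂ • Measure.map (⇑h₂) ν) :
    lowerDimH ν = upperDimH ν ∧
    upperDimH ν = ENNReal.ofReal
      ((p₁ * Real.log p₁ + p₂ * Real.log p₂) /
        (-2 * p₁ * Real.log 2 - (p₁ - p₂) * Real.log 5)) := by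
  have h_mono : StrictMono h₁ := by
    refine (h₁.continuous.strictMono_of_inj h₁.injective).resolve_right fun h_anti ↦ ?_
    have h_lt := h_anti (show (0 : ℝ) < 1 by norm_num)
    rw [hf₁' 0 (by norm_num), hf₁' 1 (by norm_num)] at h_lt
    norm_num at h_lt
  refine example_dimension_general h₁ h₂ h_mono h₂.measurable hf₁ hf₁' (fun n x hx ↦ ?_) p₁ p₂ hp₂
    hp₁0 hp₁1 ν hinv
  obtain rfl | hn := n.eq_zero_or_pos
  · simpa using hf₂' x (by simpa using hx.2.le)
  · exact hf₂ n hn x hx
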